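/- For every ε ∈ (0,1), δ ∈ (0,1/2) and Δ ∈ (0,1), there exist d ∈ ℕ with d ≥ 1 and λ₁, λ₂ ∈ (0,1) such that, with P₀, P₁, Q₀, Q₁ the class-conditional measures and P, Q the joint measures of the counter-example: (i) KL(Q ‖ P) < ε and KL(P ‖ Q) < ε; (ii) P({(x,y) : 1 ≤ ‖x‖ ≤ 1+Δ, y = 0}) ≥ 1/3; (iii) for almost every x with 1 < ‖x‖ < 1+Δ, f_{P₁}(x) = 0 and f_{Q₁}(x) = 0 while f_{P₀}(x) > 0 and f_{Q₀}(x) > 0, so both the data posterior f_{P₀}/(f_{P₀}+f_{P₁}) and the model posterior f_{Q₀}/(f_{Q₀}+f_{Q₁}) equal 1 there; (iv) for every x with 1 ≤ ‖x‖ ≤ 1+Δ there exists x̄ with ‖x̄‖ ≤ 1 and ‖x − x̄‖ ≤ Δ; (v) for almost every x̄ with ‖x̄‖ < 1, the data posterior of class 0 satisfies f_{P₀}(x̄)/(f_{P₀}(x̄)+f_{P₁}(x̄)) ≥ 1−δ while the model posterior of class 0 satisfies f_{Q₀}(x̄)/(f_{Q₀}(x̄)+f_{Q₁}(x̄)) ≤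 δ; and (vi) the model density (1/2)(f_{Q₀}+f_{Q₁}) at almost every point of the open unit ball is at least its value at almost every point of the open annulus {1 < ‖x‖ < 1+Δ}. -/

import Mathlib

/-!
The model law `Q0` is itself of the form `P0`, with weight `q = (1 + Δ)⁻ᵈ` on the unit ball, because
a uniform law is the mixture of the uniform laws on the pieces of a partition. The laws being mixed
are mutually singular, so both divergences between the joint laws are half the relative entropy of
two Bernoulli laws, of parameters `q` and `l1`, and the `χ²` bound controls it.

On the unit ball the densities of `P0`, `P1` and `Q0` are proportional to `l1`, `l2` and `q`. With
`k = (1 - δ) / δ`, the choice `l2 = k q` and `l1 = k² q` puts the data posterior of class `0` at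
`1 - δ` and the model posterior at `δ`, while the divergences are at most `k⁴ q`, which tends to `0`
as `d → ∞`.
-/

open MeasureTheory ProbabilityTheory
open scoped ENNReal

noncomputable section

/-- The closed annulus `{x : a ≤ ‖x‖ ≤ b}` in `ℝ^d` (Euclidean norm). -/
def annulus (d : ℕ) (a b : ℝ) : Set (EuclideanSpace ℝ (Fin d)) :=
  {x | a ≤ ‖x‖ ∧ ‖x‖ ≤ b}

/-- The uniform probability measure on the annulus `A_d(a,b)`:
Lebesgue measure restricted to the annulus and normalized. -/
def U (d : ℕ) (a b : ℝ) : Measure (EuclideanSpace ℝ (Fin d)) :=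
  (volume (annulus d a b))⁻¹ • volume.restrict (annulus d a b)

/-- `C_d`, the Lebesgue volume of the unit ball in `ℝ^d`. -/
def Cd (d : ℕ) : ℝ :=
  (volume (Metric.closedBall (0 : EuclideanSpace ℝ (Fin d)) 1)).toReal

open Classical in
/-- Kullback–Leibler divergence: `∫ log (dμ/dν) dμ` if `μ ≪ ν`, and `+∞` otherwise. -/
def klDiv {X : Type*} [MeasurableSpace X] (μ ν : Measure X) : EReal :=
  if μ ≪ ν then ((∫ x, Real.log (μ.rnDeriv ν x).toReal ∂μ : ℝ) : EReal) else ⊤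

/-- `P₀ = λ₁·U_d(0,1) + (1−λ₁)·U_d(1,1+Δ)`. -/
def P0 (d : ℕ) (Δ l1 : ℝ) : Measure (EuclideanSpace ℝ (Fin d)) :=
  ENNReal.ofReal l1 • U d 0 1 + ENNReal.ofReal (1 - l1) • U d 1 (1 + Δ)

/-- `P₁ = λ₂·U_d(0,1) + (1−λ₂)·U_d(2,3)`. -/
def P1 (d : ℕ) (l2 : ℝ) : Measure (EuclideanSpace ℝ (Fin d)) :=
  ENNReal.ofReal l2 • U d 0 1 + ENNReal.ofReal (1 - l2) • U d 2 3

/-- `Q₀ = U_d(0,1+Δ)`. -/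
def Q0 (d : ℕ) (Δ : ℝ) : Measure (EuclideanSpace ℝ (Fin d)) :=
  U d 0 (1 + Δ)

/-- Joint measure on `ℝ^d × {0,1}` with uniform class prior. -/
def joint (d : ℕ) (μ0 μ1 : Measure (EuclideanSpace ℝ (Fin d))) :
    Measure (EuclideanSpace ℝ (Fin d) × Fin 2) :=
  (1/2 : ℝ≥0∞) • μ0.map (fun x => (x, 0)) + (1/2 : ℝ≥0∞) • μ1.map (fun x => (x, 1))

/-- Real-valued density of `μ` with respect to Lebesgue measure. -/
def f (d : ℕ) (μ : Measure (EuclideanSpace ℝ (Fin d))) (x : EuclideanSpace ℝ (Fin d)) : ℝ :=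
  (μ.rnDeriv volume x).toReal

/-- The relative entropy of a Bernoulli law of parameter `a` from one of parameter `b`, to which
the divergence between two mixtures of the same pair of mutually singular laws reduces. -/
def bernoulliKL (a b : ℝ) : ℝ :=
  a * Real.log (a / b) + (1 - a) * Real.log ((1 - a) / (1 - b))

-- The right-hand side is the `χ²` divergence.
lemma bernoulliKL_le_sq_div {a b : ℝ} (ha : a ∈ Set.Ioo 0 1) (hb : b ∈ Set.Ioo 0 1) :
    bernoulliKL a b ≤ (a - b) ^ 2 / (b * (1 - b)) := by
  have ha' : 0 < 1 - a := sub_pos.2 ha.2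
  have hb' : 0 < 1 - b := sub_pos.2 hb.2
  calc bernoulliKL a b ≤ a * (a / b - 1) + (1 - a) * ((1 - a) / (1 - b) - 1) :=
        add_le_add
          (mul_le_mul_of_nonneg_left (Real.log_le_sub_one_of_pos (div_pos ha.1 hb.1)) ha.1.le)
          (mul_le_mul_of_nonneg_left (Real.log_le_sub_one_of_pos (div_pos ha' hb')) ha'.le)
    _ = (a - b) ^ 2 / (b * (1 - b)) := by
        have := hb.1.ne'
        field_simp
        ring

lemma bernoulliKL_mul_left_le {K q : ℝ} (hK : 1 ≤ K) (hq : 0 < q) (hKq : K * q ≤ 1 / 2) :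
    bernoulliKL (K * q) q ≤ 2 * (K ^ 2 * q) := by
  have hq' : q ≤ 1 / 2 := (le_mul_of_one_le_left hq.le hK).trans hKq
  refine (bernoulliKL_le_sq_div ⟨by positivity, by linarith⟩ ⟨hq, by linarith⟩).trans ?_
  have hK' : (K - 1) ^ 2 ≤ K ^ 2 := by nlinarith
  rw [div_le_iff₀ (mul_pos hq (by linarith))]
  calc (K * q - q) ^ 2 = (K - 1) ^ 2 * q ^ 2 := by ring
    _ ≤ K ^ 2 * q ^ 2 := by gcongr
    _ ≤ K ^ 2 * q ^ 2 * (2 * (1 - q)) := le_mul_of_one_le_right (by positivity) (by linarith)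
    _ = 2 * (K ^ 2 * q) * (q * (1 - q)) := by ring

lemma bernoulliKL_mul_right_le {K q : ℝ} (hK : 1 ≤ K) (hq : 0 < q) (hKq : K * q ≤ 1 / 2) :
    bernoulliKL q (K * q) ≤ 2 * (K ^ 2 * q) := by
  have hq' : q ≤ 1 / 2 := (le_mul_of_one_le_left hq.le hK).trans hKq
  refine (bernoulliKL_le_sq_div ⟨hq, by linarith⟩ ⟨by positivity, by linarith⟩).trans ?_
  have hK' : (K - 1) ^ 2 ≤ K ^ 3 := by nlinarith [sq_nonneg (K - 1)]
  rw [div_le_iff₀ (mul_pos (by positivity) (by linarith))]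
  calc (q - K * q) ^ 2 = (K - 1) ^ 2 * q ^ 2 := by ring
    _ ≤ K ^ 3 * q ^ 2 := by gcongr
    _ ≤ K ^ 3 * q ^ 2 * (2 * (1 - K * q)) := le_mul_of_one_le_right (by positivity) (by linarith)
    _ = 2 * (K ^ 2 * q) * (K * q * (1 - K * q)) := by ring

lemma one_sub_le_div_add {a b δ : ℝ} (h : (1 - δ) * b ≤ δ * a) (hab : 0 < a + b) :
    1 - δ ≤ a / (a + b) := by
  rw [le_div_iff₀ hab]
  linarith

lemma div_add_le {a b δ : ℝ} (h : (1 - δ) * a ≤ δ * b) (hab : 0 < a + b) :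
    a / (a + b) ≤ δ := by
  rw [div_le_iff₀ hab]
  linarith

lemma exists_inv_pow_lt {r η : ℝ} (hr : 1 < r) (hη : 0 < η) :
    ∃ d : ℕ, d ≠ 0 ∧ (r ^ d)⁻¹ < η := by
  have hlim : Filter.Tendsto (fun d : ℕ => (r ^ d)⁻¹) Filter.atTop (nhds 0) :=
    tendsto_inv_atTop_zero.comp (tendsto_pow_atTop_atTop_of_one_lt hr)
  exact ((Filter.eventually_ne_atTop 0).and (hlim.eventually_lt_const hη)).exists

lemma exists_dim_weights {ε δ Δ : ℝ} (hε : ε ∈ Set.Ioo 0 1) (hδ : δ ∈ Set.Ioo 0 (1 / 2))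
    (hΔ : 0 < Δ) :
    ∃ (d : ℕ) (l1 l2 : ℝ), d ≠ 0 ∧ l1 ∈ Set.Ioo 0 (1 / 3) ∧ l2 ∈ Set.Ioo 0 1 ∧
      (1 - δ) * l2 ≤ δ * l1 ∧ (1 - δ) * ((1 + Δ) ^ d)⁻¹ ≤ δ * l2 ∧
      1 / 2 * bernoulliKL ((1 + Δ) ^ d)⁻¹ l1 < ε ∧
      1 / 2 * bernoulliKL l1 ((1 + Δ) ^ d)⁻¹ < ε := by
  obtain ⟨hδ0, hδ2⟩ := hδ
  obtain ⟨k, hk⟩ : ∃ k, k = (1 - δ) / δ := ⟨_, rfl⟩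
  have hkδ : δ * k = 1 - δ := by rw [hk, mul_div_cancel₀ _ hδ0.ne']
  have hk1 : 1 ≤ k := by rw [hk, one_le_div hδ0]; linarith
  have hk2 : 1 ≤ k ^ 2 := one_le_pow₀ hk1
  obtain ⟨d, hd, hdε⟩ := exists_inv_pow_lt (r := 1 + Δ) (η := ε / (3 * (k ^ 2) ^ 2))
    (by linarith) (div_pos hε.1 (by positivity))
  have hq : 0 < ((1 + Δ) ^ d)⁻¹ := by positivity
  refine ⟨d, k ^ 2 * ((1 + Δ) ^ d)⁻¹, k * ((1 + Δ) ^ d)⁻¹, hd, ?_⟩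
  generalize ((1 + Δ) ^ d)⁻¹ = q at hdε hq ⊢
  have hεq : (k ^ 2) ^ 2 * q < ε / 3 := by
    rw [lt_div_iff₀ (by positivity)] at hdε
    linarith
  have hk4 : k ^ 2 * q ≤ (k ^ 2) ^ 2 * q :=
    mul_le_mul_of_nonneg_right (le_self_pow₀ hk2 two_ne_zero) hq.le
  have hk12 : k * q ≤ k ^ 2 * q :=
    mul_le_mul_of_nonneg_right (le_self_pow₀ hk1 two_ne_zero) hq.le
  obtain ⟨hε0, hε1⟩ := hε
  have hQP := bernoulliKL_mul_right_le hk2 hq (by linarith)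
  have hPQ := bernoulliKL_mul_left_le hk2 hq (by linarith)
  exact ⟨⟨by positivity, by linarith⟩, ⟨by positivity, by linarith⟩,
    le_of_eq (by rw [← hkδ]; ring), le_of_eq (by rw [← hkδ]; ring), by linarith, by linarith⟩

section Mixture

variable {E : Type*} [MeasurableSpace E] {μ ν : Measure E} {a b l : ℝ}

/-- The mixture `l·μ + (1 − l)·ν`, a probability measure when `μ` and `ν` are and `0 ≤ l ≤ 1`. The
weights are truncated at `0`, so only values `l ∈ [0, 1]` are meaningful. -/
def mixture (l : ℝ) (μ ν : Measure E) : Measure E :=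
  ENNReal.ofReal l • μ + ENNReal.ofReal (1 - l) • ν

instance [IsFiniteMeasure μ] [IsFiniteMeasure ν] : IsFiniteMeasure (mixture l μ ν) :=
  have := μ.smul_finite (c := ENNReal.ofReal l) ENNReal.ofReal_ne_top
  have := ν.smul_finite (c := ENNReal.ofReal (1 - l)) ENNReal.ofReal_ne_top
  inferInstanceAs (IsFiniteMeasure (_ + _))

lemma integrable_mixture {F : E → ℝ} (hμ : Integrable F μ) (hν : Integrable F ν) :
    Integrable F (mixture l μ ν) :=
  (hμ.smul_measure ENNReal.ofReal_ne_top).add_measure (hν.smul_measure ENNReal.ofReal_ne_top)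

lemma integral_mixture {F : E → ℝ} (hl : l ∈ Set.Icc 0 1) (hμ : Integrable F μ)
    (hν : Integrable F ν) :
    ∫ x, F x ∂mixture l μ ν = l * ∫ x, F x ∂μ + (1 - l) * ∫ x, F x ∂ν := by
  rw [mixture, integral_add_measure (hμ.smul_measure ENNReal.ofReal_ne_top)
    (hν.smul_measure ENNReal.ofReal_ne_top), integral_smul_measure, integral_smul_measure,
    ENNReal.toReal_ofReal hl.1, ENNReal.toReal_ofReal (sub_nonneg.2 hl.2), smul_eq_mul, smul_eq_mul]

lemma withDensity_mixture {g : E → ℝ≥0∞} (hb : b ∈ Set.Ioo 0 1)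
    (hμ : g =ᵐ[μ] fun _ => ENNReal.ofReal (a / b))
    (hν : g =ᵐ[ν] fun _ => ENNReal.ofReal ((1 - a) / (1 - b))) :
    (mixture b μ ν).withDensity g = mixture a μ ν := by
  have hb' : 0 < 1 - b := sub_pos.2 hb.2
  rw [mixture, withDensity_add_measure, withDensity_smul_measure, withDensity_smul_measure,
    withDensity_congr_ae hμ, withDensity_congr_ae hν, withDensity_const, withDensity_const,
    smul_smul, smul_smul, ← ENNReal.ofReal_mul hb.1.le, ← ENNReal.ofReal_mul hb'.le,
    mul_div_cancel₀ _ hb.1.ne', mul_div_cancel₀ _ hb'.ne', mixture]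

lemma rnDeriv_mixture_toReal [IsFiniteMeasure μ] [IsFiniteMeasure ν] {m : Measure E} [SigmaFinite m]
    (hl : l ∈ Set.Icc 0 1) :
    ∀ᵐ x ∂m, ((mixture l μ ν).rnDeriv m x).toReal =
      l * (μ.rnDeriv m x).toReal + (1 - l) * (ν.rnDeriv m x).toReal := by
  have := μ.smul_finite (c := ENNReal.ofReal l) ENNReal.ofReal_ne_top
  have := ν.smul_finite (c := ENNReal.ofReal (1 - l)) ENNReal.ofReal_ne_top
  filter_upwards [Measure.rnDeriv_add (ENNReal.ofReal l • μ) (ENNReal.ofReal (1 - l) • ν) m,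
    Measure.rnDeriv_smul_left_of_ne_top μ m (r := ENNReal.ofReal l) ENNReal.ofReal_ne_top,
    Measure.rnDeriv_smul_left_of_ne_top ν m (r := ENNReal.ofReal (1 - l)) ENNReal.ofReal_ne_top,
    μ.rnDeriv_ne_top m, ν.rnDeriv_ne_top m] with x hadd hμ hν hμ' hν'
  rw [mixture, hadd, Pi.add_apply, hμ, hν, Pi.smul_apply, Pi.smul_apply, smul_eq_mul, smul_eq_mul,
    ENNReal.toReal_add (ENNReal.mul_ne_top ENNReal.ofReal_ne_top hμ')
      (ENNReal.mul_ne_top ENNReal.ofReal_ne_top hν'),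
    ENNReal.toReal_mul, ENNReal.toReal_mul, ENNReal.toReal_ofReal hl.1,
    ENNReal.toReal_ofReal (sub_nonneg.2 hl.2)]

lemma exists_measurable_ae_eq_const_of_mutuallySingular {F : Type*} [MeasurableSpace F]
    (h : μ ⟂ₘ ν) (y z : F) :
    ∃ g : E → F, Measurable g ∧ (g =ᵐ[μ] fun _ => y) ∧ g =ᵐ[ν] fun _ => z := by
  classical
  refine ⟨h.nullSet.piecewise (fun _ => z) fun _ => y,
    measurable_const.piecewise h.measurableSet_nullSet measurable_const, ?_, ?_⟩
  · filter_upwards [measure_eq_zero_iff_ae_notMem.1 h.measure_nullSet] with x hx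
    exact Set.piecewise_eq_of_notMem _ _ _ hx
  · filter_upwards [measure_eq_zero_iff_ae_notMem.1 h.measure_compl_nullSet] with x hx
    exact Set.piecewise_eq_of_mem _ _ _ (Set.notMem_compl_iff.1 hx)

lemma mutuallySingular_cond {m : Measure E} {s t : Set E} (hs : MeasurableSet s)
    (hst : AEDisjoint m s t) : m[|s] ⟂ₘ m[|t] := by
  have hsing : m.restrict s ⟂ₘ m.restrict t := by
    refine .mk (s := sᶜ) (t := s) ?_ ?_ s.compl_union_self.ge
    · rw [Measure.restrict_apply hs.compl, Set.compl_inter_self, measure_empty]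
    · rwa [Measure.restrict_apply hs]
  exact ((hsing.smul _).symm.smul _).symm

lemma cond_union_eq_mixture {m : Measure E} {s t : Set E} (hst : AEDisjoint m s t)
    (ht : NullMeasurableSet t m) (hs0 : m s ≠ 0) (ht0 : m t ≠ 0) (hs' : m s ≠ ∞) (ht' : m t ≠ ∞) :
    m[|s ∪ t] = mixture (m.real s / m.real (s ∪ t)) m[|s] m[|t] := by
  have hpos (u : Set E) (h0 : m u ≠ 0) (h' : m u ≠ ∞) : 0 < m.real u := ENNReal.toReal_pos h0 h'
  have hinv (u : Set E) (h0 : m u ≠ 0) (h' : m u ≠ ∞) :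
      (m u)⁻¹ = ENNReal.ofReal (m.real u)⁻¹ := by
    rw [ENNReal.ofReal_inv_of_pos (hpos u h0 h'), ofReal_measureReal h']
  have hu := measureReal_union₀ ht hst hs' ht'
  have hspos := hpos s hs0 hs'
  have htpos := hpos t ht0 ht'
  have hupos : 0 < m.real (s ∪ t) := hu ▸ add_pos hspos htpos
  have hws : m.real s / m.real (s ∪ t) * (m.real s)⁻¹ = (m.real (s ∪ t))⁻¹ := by
    field_simp
  have hwt : (1 - m.real s / m.real (s ∪ t)) * (m.real t)⁻¹ = (m.real (s ∪ t))⁻¹ := by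
    rw [one_sub_div hupos.ne', hu, add_sub_cancel_left]
    field_simp
  have hu0 : m (s ∪ t) ≠ 0 := fun h => hs0 (measure_mono_null Set.subset_union_left h)
  have hl : m.real s / m.real (s ∪ t) ≤ 1 := (div_le_one hupos).2 (by linarith)
  rw [mixture, ProbabilityTheory.cond, ProbabilityTheory.cond, ProbabilityTheory.cond,
    hinv s hs0 hs', hinv t ht0 ht',
    hinv _ hu0 (measure_union_ne_top hs' ht'),
    smul_smul, smul_smul, ← ENNReal.ofReal_mul (by positivity),
    ← ENNReal.ofReal_mul (sub_nonneg.2 hl), hws, hwt, ← smul_add, Measure.restrict_union₀ hst ht]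

end Mixture

section Divergence

variable {E F : Type*} [MeasurableSpace E] [MeasurableSpace F]

lemma withDensity_map (μ : Measure E) {φ : E → F} (hφ : Measurable φ) {g : F → ℝ≥0∞}
    (hg : Measurable g) : (μ.map φ).withDensity g = (μ.withDensity (g ∘ φ)).map φ := by
  ext u hu
  rw [withDensity_apply _ hu, Measure.map_apply hφ hu, withDensity_apply _ (hφ hu),
    setLIntegral_map hu hg hφ]
  rfl

lemma klDiv_withDensity (ν : Measure E) [SigmaFinite ν] {g : E → ℝ≥0∞} (hg : Measurable g) :
    klDiv (ν.withDensity g) ν =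
      ((∫ x, Real.log (g x).toReal ∂ν.withDensity g : ℝ) : EReal) := by
  have hac := withDensity_absolutelyContinuous ν g
  have hlog : (fun x => Real.log ((ν.withDensity g).rnDeriv ν x).toReal)
      =ᵐ[ν.withDensity g] fun x => Real.log (g x).toReal := by
    filter_upwards [hac.ae_le (Measure.rnDeriv_withDensity ν hg)] with x hx
    rw [hx]
  rw [klDiv, if_pos hac, integral_congr_ae hlog]

end Divergence

section Joint

variable {d : ℕ} {μ ν ρ : Measure (EuclideanSpace ℝ (Fin d))}

lemma joint_eq_mixture (μ ρ : Measure (EuclideanSpace ℝ (Fin d))) :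
    joint d μ ρ = mixture (1 / 2) (μ.map fun x => (x, 0)) (ρ.map fun x => (x, 1)) := by
  have h : ENNReal.ofReal (1 / 2) = 1 / 2 := by
    rw [ENNReal.ofReal_div_of_pos two_pos, ENNReal.ofReal_one, ENNReal.ofReal_ofNat]
  rw [joint, mixture, sub_half, h]

instance [IsFiniteMeasure μ] [IsFiniteMeasure ρ] : IsFiniteMeasure (joint d μ ρ) :=
  joint_eq_mixture μ ρ ▸ inferInstance

lemma integral_joint {G : EuclideanSpace ℝ (Fin d) × Fin 2 → ℝ}
    (hμ : Integrable (fun x => G (x, 0)) μ) (hρ : Integrable (fun x => G (x, 1)) ρ) :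
    ∫ p, G p ∂joint d μ ρ = 1 / 2 * ((∫ x, G (x, 0) ∂μ) + ∫ x, G (x, 1) ∂ρ) := by
  have hemb (i : Fin 2) : MeasurableEmbedding fun x : EuclideanSpace ℝ (Fin d) => (x, i) :=
    measurableEmbedding_prod_mk_right i
  rw [joint_eq_mixture, integral_mixture (by norm_num) ((hemb 0).integrable_map_iff.2 hμ)
    ((hemb 1).integrable_map_iff.2 hρ), (hemb 0).integral_map, (hemb 1).integral_map]
  ring

lemma measurable_ite_snd_eq_zero {g : EuclideanSpace ℝ (Fin d) → ℝ≥0∞} (hg : Measurable g) :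
    Measurable fun p : EuclideanSpace ℝ (Fin d) × Fin 2 => if p.2 = 0 then g p.1 else 1 :=
  (hg.comp measurable_fst).ite (measurable_snd (measurableSet_singleton 0)) measurable_const

lemma joint_withDensity_left {g : EuclideanSpace ℝ (Fin d) → ℝ≥0∞} (hg : Measurable g) :
    joint d (μ.withDensity g) ρ =
      (joint d μ ρ).withDensity fun p => if p.2 = 0 then g p.1 else 1 := by
  have hG := measurable_ite_snd_eq_zero hg
  rw [joint, joint, withDensity_add_measure, withDensity_smul_measure, withDensity_smul_measure,
    withDensity_map _ measurable_prodMk_right hG, withDensity_map _ measurable_prodMk_right hG]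
  simp [Function.comp_def, ← Pi.one_def]

lemma klDiv_joint_withDensity_left [IsFiniteMeasure μ] [IsFiniteMeasure ρ]
    {g : EuclideanSpace ℝ (Fin d) → ℝ≥0∞} (hg : Measurable g)
    (hint : Integrable (fun x => Real.log (g x).toReal) (μ.withDensity g)) :
    klDiv (joint d (μ.withDensity g) ρ) (joint d μ ρ) =
      ((1 / 2 * ∫ x, Real.log (g x).toReal ∂μ.withDensity g : ℝ) : EReal) := by
  have hG := measurable_ite_snd_eq_zero hg
  rw [joint_withDensity_left hg, klDiv_withDensity _ hG, ← joint_withDensity_left hg,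
    integral_joint (by simpa using hint) (by simp)]
  simp

lemma klDiv_joint_mixture {a b : ℝ} [IsProbabilityMeasure μ] [IsProbabilityMeasure ν]
    [IsFiniteMeasure ρ] (hμν : μ ⟂ₘ ν) (ha : a ∈ Set.Icc 0 1) (hb : b ∈ Set.Ioo 0 1) :
    klDiv (joint d (mixture a μ ν) ρ) (joint d (mixture b μ ν) ρ) =
      ((1 / 2 * bernoulliKL a b : ℝ) : EReal) := by
  obtain ⟨g, hg, hgμ, hgν⟩ := exists_measurable_ae_eq_const_of_mutuallySingular hμν
    (ENNReal.ofReal (a / b)) (ENNReal.ofReal ((1 - a) / (1 - b)))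
  have hlogμ : (fun x => Real.log (g x).toReal) =ᵐ[μ] fun _ => Real.log (a / b) := by
    filter_upwards [hgμ] with x hx
    rw [hx, ENNReal.toReal_ofReal (div_nonneg ha.1 hb.1.le)]
  have hlogν : (fun x => Real.log (g x).toReal) =ᵐ[ν] fun _ => Real.log ((1 - a) / (1 - b)) := by
    filter_upwards [hgν] with x hx
    rw [hx, ENNReal.toReal_ofReal (div_nonneg (sub_nonneg.2 ha.2) (sub_nonneg.2 hb.2.le))]
  have hintμ := (integrable_congr hlogμ).2 (integrable_const _)
  have hintν := (integrable_congr hlogν).2 (integrable_const _)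
  have hdens := withDensity_mixture hb hgμ hgν
  rw [← hdens, klDiv_joint_withDensity_left hg (hdens ▸ integrable_mixture hintμ hintν), hdens,
    integral_mixture ha hintμ hintν, integral_congr_ae hlogμ, integral_congr_ae hlogν]
  simp [bernoulliKL]

lemma joint_annulus_zero (μ ρ : Measure (EuclideanSpace ℝ (Fin d))) (a b : ℝ) :
    joint d μ ρ {p | a ≤ ‖p.1‖ ∧ ‖p.1‖ ≤ b ∧ p.2 = 0} = 1 / 2 * μ (annulus d a b) := by
  rw [joint, Measure.add_apply, Measure.smul_apply, Measure.smul_apply,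
    (measurableEmbedding_prod_mk_right 0).map_apply,
    (measurableEmbedding_prod_mk_right 1).map_apply]
  simp [annulus]

end Joint

section Annulus

variable {d : ℕ} {a b c : ℝ}

lemma measurableSet_annulus (d : ℕ) (a b : ℝ) : MeasurableSet (annulus d a b) :=
  (measurableSet_le measurable_const measurable_norm).inter
    (measurableSet_le measurable_norm measurable_const)

lemma annulus_zero_left (d : ℕ) (b : ℝ) : annulus d 0 b = Metric.closedBall 0 b := by
  ext x
  simp [annulus]

lemma annulus_union_annulus (hab : a ≤ b) (hbc : b ≤ c) :
    annulus d a b ∪ annulus d b c = annulus d a c := by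
  ext x
  simp only [annulus, Set.mem_union, Set.mem_ofPred_eq]
  grind

lemma aedisjoint_annulus (hb : b ≠ 0) : AEDisjoint volume (annulus d a b) (annulus d b c) :=
  measure_mono_null (fun _ hx => mem_sphere_zero_iff_norm.2 (le_antisymm hx.1.2 hx.2.1))
    (Measure.addHaar_sphere_of_ne_zero volume 0 hb)

lemma volume_annulus_ne_top : volume (annulus d a b) ≠ ∞ :=
  measure_ne_top_of_subset (fun _ hx => mem_closedBall_zero_iff.2 hx.2)
    measure_closedBall_lt_top.ne

lemma volume_annulus_ne_zero (hd : d ≠ 0) (ha : 0 ≤ a) (hab : a < b) :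
    volume (annulus d a b) ≠ 0 := by
  have := NeZero.mk hd
  have hopen : IsOpen {x : EuclideanSpace ℝ (Fin d) | a < ‖x‖ ∧ ‖x‖ < b} :=
    (isOpen_lt continuous_const continuous_norm).inter (isOpen_lt continuous_norm continuous_const)
  obtain ⟨x, hx⟩ := exists_norm_eq (EuclideanSpace ℝ (Fin d)) (c := (a + b) / 2) (by linarith)
  have hne : {x : EuclideanSpace ℝ (Fin d) | a < ‖x‖ ∧ ‖x‖ < b}.Nonempty :=
    ⟨x, by rw [hx]; linarith, by rw [hx]; linarith⟩
  have hsub : {x : EuclideanSpace ℝ (Fin d) | a < ‖x‖ ∧ ‖x‖ < b} ⊆ annulus d a b :=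
    fun _ hy => ⟨hy.1.le, hy.2.le⟩
  exact fun h => hopen.measure_ne_zero volume hne (measure_mono_null hsub h)

lemma volume_real_annulus_pos (hd : d ≠ 0) (ha : 0 ≤ a) (hab : a < b) :
    0 < volume.real (annulus d a b) :=
  ENNReal.toReal_pos (volume_annulus_ne_zero hd ha hab) volume_annulus_ne_top

lemma volume_real_annulus_zero (d : ℕ) (hb : 0 ≤ b) :
    volume.real (annulus d 0 b) = b ^ d * Cd d := by
  rw [annulus_zero_left, Measure.addHaar_real_closedBall' _ _ hb, finrank_euclideanSpace_fin]
  rfl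

lemma Cd_pos (d : ℕ) : 0 < Cd d :=
  ENNReal.toReal_pos (Metric.measure_closedBall_pos _ _ one_pos).ne' measure_closedBall_lt_top.ne

end Annulus

section Uniform

variable {d : ℕ} {a b c l Δ : ℝ}

instance : IsFiniteMeasure (U d a b) :=
  inferInstanceAs (IsFiniteMeasure volume[|annulus d a b])

instance : IsFiniteMeasure (P1 d l) :=
  inferInstanceAs (IsFiniteMeasure (mixture l (U d 0 1) (U d 2 3)))

lemma isProbabilityMeasure_U (hd : d ≠ 0) (ha : 0 ≤ a) (hab : a < b) :
    IsProbabilityMeasure (U d a b) :=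
  cond_isProbabilityMeasure_of_finite (volume_annulus_ne_zero hd ha hab) volume_annulus_ne_top

lemma mutuallySingular_U (hb : b ≠ 0) : U d a b ⟂ₘ U d b c :=
  mutuallySingular_cond (measurableSet_annulus d a b) (aedisjoint_annulus hb)

lemma U_eq_mixture (hd : d ≠ 0) (ha : 0 ≤ a) (hab : a < b) (hbc : b < c) :
    U d a c = mixture (volume.real (annulus d a b) / volume.real (annulus d a c))
      (U d a b) (U d b c) := by
  have hb := ha.trans_lt hab
  have h := cond_union_eq_mixture (aedisjoint_annulus hb.ne')
    (measurableSet_annulus d b c).nullMeasurableSet (volume_annulus_ne_zero hd ha hab)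
    (volume_annulus_ne_zero hd hb.le hbc) volume_annulus_ne_top volume_annulus_ne_top
  rwa [annulus_union_annulus hab.le hbc.le] at h

lemma Q0_eq_P0 (hd : d ≠ 0) (hΔ : 0 < Δ) : Q0 d Δ = P0 d Δ ((1 + Δ) ^ d)⁻¹ := by
  have hratio : volume.real (annulus d 0 1) / volume.real (annulus d 0 (1 + Δ)) =
      ((1 + Δ) ^ d)⁻¹ := by
    rw [volume_real_annulus_zero d zero_le_one, volume_real_annulus_zero d (by linarith), one_pow,
      one_mul, mul_comm, div_mul_cancel_left₀ (Cd_pos d).ne']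
  rw [Q0, U_eq_mixture hd le_rfl one_pos (lt_add_of_pos_right 1 hΔ), hratio]
  rfl

lemma klDiv_joint_P0 {ρ : Measure (EuclideanSpace ℝ (Fin d))} [IsFiniteMeasure ρ] (hd : d ≠ 0)
    (hΔ : 0 < Δ) (ha : a ∈ Set.Icc 0 1) (hb : b ∈ Set.Ioo 0 1) :
    klDiv (joint d (P0 d Δ a) ρ) (joint d (P0 d Δ b) ρ) =
      ((1 / 2 * bernoulliKL a b : ℝ) : EReal) :=
  have := isProbabilityMeasure_U hd le_rfl one_pos
  have := isProbabilityMeasure_U hd zero_le_one (lt_add_of_pos_right 1 hΔ)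
  klDiv_joint_mixture (mutuallySingular_U one_ne_zero) ha hb

lemma ofReal_one_sub_le_P0_annulus (hd : d ≠ 0) (hΔ : 0 < Δ) :
    ENNReal.ofReal (1 - l) ≤ P0 d Δ l (annulus d 1 (1 + Δ)) := by
  have hU : U d 1 (1 + Δ) (annulus d 1 (1 + Δ)) = 1 :=
    cond_apply_self (volume_annulus_ne_zero hd zero_le_one (lt_add_of_pos_right 1 hΔ))
      volume_annulus_ne_top
  calc ENNReal.ofReal (1 - l) = (ENNReal.ofReal (1 - l) • U d 1 (1 + Δ)) (annulus d 1 (1 + Δ)) := by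
        rw [Measure.smul_apply, hU, smul_eq_mul, mul_one]
    _ ≤ P0 d Δ l (annulus d 1 (1 + Δ)) := le_add_self

lemma third_le_joint_P0_annulus {ρ : Measure (EuclideanSpace ℝ (Fin d))} (hd : d ≠ 0) (hΔ : 0 < Δ)
    (hl : l ≤ 1 / 3) :
    1 / 3 ≤ joint d (P0 d Δ l) ρ {p | 1 ≤ ‖p.1‖ ∧ ‖p.1‖ ≤ 1 + Δ ∧ p.2 = 0} := by
  have h : (1 / 3 : ℝ≥0∞) = 1 / 2 * ENNReal.ofReal (2 / 3) := by
    rw [ENNReal.ofReal_div_of_pos three_pos, ENNReal.ofReal_ofNat, ENNReal.ofReal_ofNat,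
      ← mul_div_assoc, ENNReal.div_mul_cancel two_ne_zero ENNReal.ofNat_ne_top]
  rw [joint_annulus_zero, h]
  gcongr
  exact (ENNReal.ofReal_le_ofReal (by linarith)).trans (ofReal_one_sub_le_P0_annulus hd hΔ)

end Uniform

section Density

variable {d : ℕ} {a b a' b' l l1 l2 δ Δ : ℝ}

lemma f_U_ae_eq (d : ℕ) (a b : ℝ) :
    f d (U d a b) =ᵐ[volume]
      (annulus d a b).indicator fun _ => (volume.real (annulus d a b))⁻¹ := by
  filter_upwards [pdf.IsUniform.pdf_toReal_ae_eq (measurableSet_annulus d a b)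
    (pdf.IsUniform.cond (μ := volume))] with x hx
  rw [pdf, Measure.map_id] at hx
  refine hx.trans ?_
  by_cases h : x ∈ annulus d a b <;> simp [h, Measure.real]

lemma f_mixture_U (hl : l ∈ Set.Icc 0 1) :
    ∀ᵐ x, f d (mixture l (U d a b) (U d a' b')) x =
      l * (annulus d a b).indicator (fun _ => (volume.real (annulus d a b))⁻¹) x +
      (1 - l) * (annulus d a' b').indicator (fun _ => (volume.real (annulus d a' b'))⁻¹) x := by
  filter_upwards [rnDeriv_mixture_toReal (μ := U d a b) (ν := U d a' b') hl,
    f_U_ae_eq d a b, f_U_ae_eq d a' b'] with x hx h h'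
  rw [← h, ← h']
  exact hx

lemma f_P0_of_norm_lt_one (hl : l ∈ Set.Icc 0 1) :
    ∀ᵐ x, ‖x‖ < 1 → f d (P0 d Δ l) x = l * (Cd d)⁻¹ := by
  filter_upwards [f_mixture_U (a := 0) (b := 1) (a' := 1) (b' := 1 + Δ) hl] with x hx h
  have hball : x ∈ annulus d 0 1 := ⟨norm_nonneg x, h.le⟩
  have hann : x ∉ annulus d 1 (1 + Δ) := fun hmem => h.not_ge hmem.1
  rw [P0, ← mixture, hx, Set.indicator_of_mem hball, Set.indicator_of_notMem hann,
    volume_real_annulus_zero d zero_le_one, one_pow, one_mul, mul_zero, add_zero]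

lemma f_P1_of_norm_lt_one (hl : l ∈ Set.Icc 0 1) :
    ∀ᵐ x, ‖x‖ < 1 → f d (P1 d l) x = l * (Cd d)⁻¹ := by
  filter_upwards [f_mixture_U (a := 0) (b := 1) (a' := 2) (b' := 3) hl] with x hx h
  have hball : x ∈ annulus d 0 1 := ⟨norm_nonneg x, h.le⟩
  have hann : x ∉ annulus d 2 3 := fun hmem => by linarith [hmem.1]
  rw [P1, ← mixture, hx, Set.indicator_of_mem hball, Set.indicator_of_notMem hann,
    volume_real_annulus_zero d zero_le_one, one_pow, one_mul, mul_zero, add_zero]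

lemma f_P0_of_one_lt_norm (hl : l ∈ Set.Icc 0 1) :
    ∀ᵐ x, 1 < ‖x‖ → ‖x‖ < 1 + Δ →
      f d (P0 d Δ l) x = (1 - l) * (volume.real (annulus d 1 (1 + Δ)))⁻¹ := by
  filter_upwards [f_mixture_U (a := 0) (b := 1) (a' := 1) (b' := 1 + Δ) hl] with x hx h h'
  have hball : x ∉ annulus d 0 1 := fun hmem => h.not_ge hmem.2
  have hann : x ∈ annulus d 1 (1 + Δ) := ⟨h.le, h'.le⟩
  rw [P0, ← mixture, hx, Set.indicator_of_notMem hball, Set.indicator_of_mem hann, mul_zero,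
    zero_add]

lemma f_P1_eq_zero (hl : l ∈ Set.Icc 0 1) :
    ∀ᵐ x, 1 < ‖x‖ → ‖x‖ < 2 → f d (P1 d l) x = 0 := by
  filter_upwards [f_mixture_U (a := 0) (b := 1) (a' := 2) (b' := 3) hl] with x hx h h'
  have hball : x ∉ annulus d 0 1 := fun hmem => h.not_ge hmem.2
  have hann : x ∉ annulus d 2 3 := fun hmem => h'.not_ge hmem.1
  rw [P1, ← mixture, hx, Set.indicator_of_notMem hball, Set.indicator_of_notMem hann, mul_zero,
    mul_zero, add_zero]

lemma f_Q0_of_norm_lt (d : ℕ) (Δ : ℝ) :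
    ∀ᵐ x, ‖x‖ < 1 + Δ → f d (Q0 d Δ) x = ((1 + Δ) ^ d)⁻¹ * (Cd d)⁻¹ := by
  filter_upwards [f_U_ae_eq d 0 (1 + Δ)] with x hx h
  have hmem : x ∈ annulus d 0 (1 + Δ) := ⟨norm_nonneg x, h.le⟩
  rw [Q0, hx, Set.indicator_of_mem hmem,
    volume_real_annulus_zero d ((norm_nonneg x).trans h.le), mul_inv]

lemma posteriors_eq_one_on_annulus (hd : d ≠ 0) (hΔ : Δ ∈ Set.Ioc 0 1) (hl1 : l1 ∈ Set.Ico 0 1)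
    (hl2 : l2 ∈ Set.Icc 0 1) :
    ∀ᵐ x, 1 < ‖x‖ → ‖x‖ < 1 + Δ →
      f d (P1 d l2) x = 0 ∧ 0 < f d (P0 d Δ l1) x ∧ 0 < f d (Q0 d Δ) x ∧
      f d (P0 d Δ l1) x / (f d (P0 d Δ l1) x + f d (P1 d l2) x) = 1 ∧
      f d (Q0 d Δ) x / (f d (Q0 d Δ) x + f d (P1 d l2) x) = 1 := by
  filter_upwards [f_P0_of_one_lt_norm (Set.Ico_subset_Icc_self hl1), f_P1_eq_zero hl2,
    f_Q0_of_norm_lt d Δ] with x hP0 hP1 hQ0 h h'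
  have hvol := volume_real_annulus_pos hd zero_le_one (lt_add_of_pos_right 1 hΔ.1)
  have hP1 := hP1 h (by linarith [hΔ.2])
  have hP0pos : 0 < f d (P0 d Δ l1) x := by
    rw [hP0 h h']
    exact mul_pos (sub_pos.2 hl1.2) (inv_pos.2 hvol)
  have hQ0pos : 0 < f d (Q0 d Δ) x := by
    have hΔ0 := hΔ.1
    have hC := Cd_pos d
    rw [hQ0 h']
    positivity
  refine ⟨hP1, hP0pos, hQ0pos, ?_, ?_⟩
  · rw [hP1, add_zero, div_self hP0pos.ne']
  · rw [hP1, add_zero, div_self hQ0pos.ne']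

lemma one_sub_le_data_posterior_on_ball (hl1 : l1 ∈ Set.Icc 0 1) (hl2 : l2 ∈ Set.Icc 0 1)
    (hpos : 0 < l1 + l2) (hodds : (1 - δ) * l2 ≤ δ * l1) :
    ∀ᵐ x, ‖x‖ < 1 → 1 - δ ≤ f d (P0 d Δ l1) x / (f d (P0 d Δ l1) x + f d (P1 d l2) x) := by
  filter_upwards [f_P0_of_norm_lt_one hl1, f_P1_of_norm_lt_one hl2] with x hP0 hP1 h
  rw [hP0 h, hP1 h, ← add_mul, mul_div_mul_right _ _ (inv_pos.2 (Cd_pos d)).ne']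
  exact one_sub_le_div_add hodds hpos

lemma model_posterior_le_on_ball (hΔ : 0 ≤ Δ) (hl2 : l2 ∈ Set.Icc 0 1)
    (hodds : (1 - δ) * ((1 + Δ) ^ d)⁻¹ ≤ δ * l2) :
    ∀ᵐ x, ‖x‖ < 1 → f d (Q0 d Δ) x / (f d (Q0 d Δ) x + f d (P1 d l2) x) ≤ δ := by
  filter_upwards [f_Q0_of_norm_lt d Δ, f_P1_of_norm_lt_one hl2] with x hQ0 hP1 h
  rw [hQ0 (h.trans_le (le_add_of_nonneg_right hΔ)), hP1 h, ← add_mul,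
    mul_div_mul_right _ _ (inv_pos.2 (Cd_pos d)).ne']
  exact div_add_le hodds (add_pos_of_pos_of_nonneg (by positivity) hl2.1)

lemma model_density_annulus_le_ball (hΔ : Δ ∈ Set.Icc 0 1) (hl2 : l2 ∈ Set.Icc 0 1) :
    ∀ᵐ x, ∀ᵐ y, ‖x‖ < 1 → 1 < ‖y‖ → ‖y‖ < 1 + Δ →
      1 / 2 * (f d (Q0 d Δ) y + f d (P1 d l2) y) ≤
        1 / 2 * (f d (Q0 d Δ) x + f d (P1 d l2) x) := by
  filter_upwards [f_Q0_of_norm_lt d Δ] with x hQ0x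
  filter_upwards [f_Q0_of_norm_lt d Δ, f_P1_eq_zero hl2] with y hQ0y hP1y hx hy hy'
  have hP1x : 0 ≤ f d (P1 d l2) x := ENNReal.toReal_nonneg
  rw [hQ0y hy', hP1y hy (by linarith [hΔ.2]), hQ0x (hx.trans_le (le_add_of_nonneg_right hΔ.1))]
  linarith

end Density

lemma exists_norm_le_one_norm_sub_le {E : Type*} [NormedAddCommGroup E] [NormedSpace ℝ E] {r : ℝ}
    (hr : 0 ≤ r) {x : E} (hx : ‖x‖ ≤ 1 + r) : ∃ y : E, ‖y‖ ≤ 1 ∧ ‖x - y‖ ≤ r := by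
  obtain ⟨y, hxy, hy⟩ := exists_dist_le_le hr zero_le_one
    (show dist x 0 ≤ 1 + r by rwa [dist_zero_right])
  exact ⟨y, by simpa using hy, by rwa [← dist_eq_norm]⟩

/-- the main proposition of the counter-example. For every `ε ∈ (0,1)`,
`δ ∈ (0,1/2)`, `Δ ∈ (0,1)` there are `d ≥ 1` and `λ₁, λ₂ ∈ (0,1)` such that the model `Q`
is `ε`-close to the data `P` in both KL directions, yet a third of the joint mass consists
of points in the annulus, correctly and confidently classified (as class 0) by both data
and model, each of which can be moved by at most `Δ` into the unit ball where the model
confidently predicts class 1 while the ground truth remains class 0, without decreasing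
the model density (here `Q₁ = P₁`). -/
theorem stmt16 (ε δ Δ : ℝ) (hε : ε ∈ Set.Ioo (0:ℝ) 1) (hδ : δ ∈ Set.Ioo (0:ℝ) (1/2))
    (hΔ : Δ ∈ Set.Ioo (0:ℝ) 1) :
    ∃ (d : ℕ) (l1 l2 : ℝ), 1 ≤ d ∧ l1 ∈ Set.Ioo (0:ℝ) 1 ∧ l2 ∈ Set.Ioo (0:ℝ) 1 ∧
      -- (i) two-sided KL closeness
      klDiv (joint d (Q0 d Δ) (P1 d l2)) (joint d (P0 d Δ l1) (P1 d l2)) < (ε : EReal) ∧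
      klDiv (joint d (P0 d Δ l1) (P1 d l2)) (joint d (Q0 d Δ) (P1 d l2)) < (ε : EReal) ∧
      -- (ii) the attackable set has probability at least 1/3
      (1/3 : ℝ≥0∞) ≤ joint d (P0 d Δ l1) (P1 d l2)
          {p : EuclideanSpace ℝ (Fin d) × Fin 2 | 1 ≤ ‖p.1‖ ∧ ‖p.1‖ ≤ 1 + Δ ∧ p.2 = 0} ∧
      -- (iii) on the open annulus, f_{P₁} = f_{Q₁} = 0 while f_{P₀}, f_{Q₀} > 0, so both
      -- posteriors of class 0 equal 1 (here Q₁ = P₁)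
      (∀ᵐ x ∂(volume : Measure (EuclideanSpace ℝ (Fin d))), 1 < ‖x‖ → ‖x‖ < 1 + Δ →
        f d (P1 d l2) x = 0 ∧ 0 < f d (P0 d Δ l1) x ∧ 0 < f d (Q0 d Δ) x ∧
        f d (P0 d Δ l1) x / (f d (P0 d Δ l1) x + f d (P1 d l2) x) = 1 ∧
        f d (Q0 d Δ) x / (f d (Q0 d Δ) x + f d (P1 d l2) x) = 1) ∧
      -- (iv) every point of the annulus is Δ-close to the closed unit ball
      (∀ x : EuclideanSpace ℝ (Fin d), 1 ≤ ‖x‖ → ‖x‖ ≤ 1 + Δ →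
        ∃ xbar : EuclideanSpace ℝ (Fin d), ‖xbar‖ ≤ 1 ∧ ‖x - xbar‖ ≤ Δ) ∧
      -- (v) on the unit ball the data posterior of class 0 is ≥ 1−δ while the model
      -- posterior of class 0 is ≤ δ
      (∀ᵐ x ∂(volume : Measure (EuclideanSpace ℝ (Fin d))), ‖x‖ < 1 →
        1 - δ ≤ f d (P0 d Δ l1) x / (f d (P0 d Δ l1) x + f d (P1 d l2) x) ∧
        f d (Q0 d Δ) x / (f d (Q0 d Δ) x + f d (P1 d l2) x) ≤ δ) ∧
      -- (vi) the model density on the unit ball dominates that on the annulus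
      (∀ᵐ x ∂(volume : Measure (EuclideanSpace ℝ (Fin d))),
        ∀ᵐ y ∂(volume : Measure (EuclideanSpace ℝ (Fin d))),
          ‖x‖ < 1 → 1 < ‖y‖ → ‖y‖ < 1 + Δ →
          1/2 * (f d (Q0 d Δ) y + f d (P1 d l2) y)
            ≤ 1/2 * (f d (Q0 d Δ) x + f d (P1 d l2) x)) := by
  obtain ⟨d, l1, l2, hd, hl1, hl2, hdata, hmodel, hQP, hPQ⟩ := exists_dim_weights hε hδ hΔ.1
  have hl1' : l1 ∈ Set.Ioo 0 1 := ⟨hl1.1, hl1.2.trans (by norm_num)⟩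
  have hl1c := Set.Ioo_subset_Icc_self hl1'
  have hl2c := Set.Ioo_subset_Icc_self hl2
  have hq : ((1 + Δ) ^ d)⁻¹ ∈ Set.Ioo (0 : ℝ) 1 := by
    have hΔ0 := hΔ.1
    exact ⟨by positivity, inv_lt_one_of_one_lt₀ (one_lt_pow₀ (lt_add_of_pos_right 1 hΔ0) hd)⟩
  refine ⟨d, l1, l2, Nat.one_le_iff_ne_zero.2 hd, hl1', hl2, ?_, ?_,
    third_le_joint_P0_annulus hd hΔ.1 hl1.2.le,
    posteriors_eq_one_on_annulus hd ⟨hΔ.1, hΔ.2.le⟩ ⟨hl1'.1.le, hl1'.2⟩ hl2c,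
    fun _ _ hx => exists_norm_le_one_norm_sub_le hΔ.1.le hx, ?_,
    model_density_annulus_le_ball (Set.Ioo_subset_Icc_self hΔ) hl2c⟩
  · rw [Q0_eq_P0 hd hΔ.1, klDiv_joint_P0 hd hΔ.1 (Set.Ioo_subset_Icc_self hq) hl1']
    exact EReal.coe_lt_coe_iff.2 hQP
  · rw [Q0_eq_P0 hd hΔ.1, klDiv_joint_P0 hd hΔ.1 hl1c hq]
    exact EReal.coe_lt_coe_iff.2 hPQ
  · filter_upwards [one_sub_le_data_posterior_on_ball hl1c hl2c (add_pos hl1.1 hl2.1) hdata,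
      model_posterior_le_on_ball hΔ.1.le hl2c hmodel] with x hP hQ h
    exact ⟨hP h, hQ h⟩
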